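/- arXiv:2406.15589 — 2 statements merged into one kernel-verified Lean document; each statement's English description precedes it below -/
import Mathlib

section
/- Let n ≥ 2. For every α ∈ F^{n−1} and every γ ∈ T₀ = {u ∈ F : u + u^q = 0}, the number of points x ∈ W = F^{n−1} × C with F_α(x) = γ equals q^{2n−2}; in particular each symbol of T₀ occurs equally often in each column of the array (F_α(x))_{x ∈ W, α ∈ F^{n−1}}. -/
/-- The affine form `F_α`; a point of `F^n` is a pair `(x₁,…,x_{n-1}, x_n)`. -/
def Falpha {F : Type*} [Field F] (q : ℕ) {m : ℕ} (a b : F) (α : Fin m → F)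
    (x : (Fin m → F) × F) : F :=
  x.2 ^ q - x.2 + ∑ i : Fin m,
    (a ^ q * x.1 i ^ (2 * q) - a * x.1 i ^ 2 - (b ^ q - b) * x.1 i ^ (q + 1)
      + (2 * a ^ q * α i ^ q - (b ^ q - b) * α i) * x.1 i ^ q
      - (2 * a * α i + (b ^ q - b) * α i ^ q) * x.1 i)

/-!
Write `φ x = x ^ q` and `h x = a x² - b x φ(x)`. As `φ` is an involution, the norms `x φ(x)` are
fixed by `φ`; expanding `h (x_i + α_i)` gives `F_α(x) = φ w - w` with
`w = x_n + ∑ᵢ (h (x_i + α_i) - h α_i)`. By additive Hilbert 90, `γ = φ v - v` for some `v`: take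
`v = d γ / (φ d - d)` for any `d` with `φ d ≠ d`. So `F_α(x) = γ` says that `w - v` lies in `K`,
and once `x₁, …, x_{n-1}` are chosen, exactly one `x_n` in the transversal `C` achieves this.
-/

section Involution

/-- The form `h x = a x² - b x φ(x)` of which `F_α` is built, for an endomorphism `φ` standing for
`x ↦ x ^ q`. -/
def hermQuad {R : Type*} [CommRing R] (φ : R →+* R) (a b x : R) : R :=
  a * x ^ 2 - b * (x * φ x)

/-- The sum `∑ᵢ (h (y_i + α_i) - h α_i)`, chosen so that `F_α(y, c) = φ w - w` for
`w = c + hermShift φ a b α y`. -/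
def hermShift {R : Type*} [CommRing R] (φ : R →+* R) {ι : Type*} [Fintype ι] (a b : R)
    (α y : ι → R) : R :=
  ∑ i, (hermQuad φ a b (y i + α i) - hermQuad φ a b (α i))

theorem map_hermQuad_sub_self {R : Type*} [CommRing R] {φ : R →+* R} (hφ : Function.Involutive φ)
    (a b x : R) :
    φ (hermQuad φ a b x) - hermQuad φ a b x
      = φ a * φ x ^ 2 - a * x ^ 2 - (φ b - b) * (x * φ x) := by
  simp only [hermQuad, map_sub, map_mul, map_pow, hφ x]
  ring

theorem Falpha_eq_map_sub_self {F : Type*} [Field F] {q : ℕ} {φ : F →+* F}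
    (hpow : ∀ x, φ x = x ^ q) (hφ : Function.Involutive φ) {m : ℕ} (a b : F) (α y : Fin m → F)
    (c : F) :
    Falpha q a b α (y, c) = φ (c + hermShift φ a b α y) - (c + hermShift φ a b α y) := by
  rw [hermShift, map_add, add_sub_add_comm, map_sum, ← Finset.sum_sub_distrib, Falpha, ← hpow c]
  congr 1
  refine Finset.sum_congr rfl fun i _ => ?_
  rw [map_sub, sub_sub_sub_comm, map_hermQuad_sub_self hφ, map_hermQuad_sub_self hφ, map_add,
    mul_comm 2 q, pow_mul, pow_succ (y i) q]
  simp only [← hpow]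
  ring

theorem exists_map_sub_self_eq {D : Type*} [DivisionRing D] {φ : D →+* D}
    (hφ : Function.Involutive φ) {b : D} (hb : φ b ≠ b) {u : D} (hu : φ u = -u) :
    ∃ v, φ v - v = u := by
  have hd : φ b - b ≠ 0 := sub_ne_zero.2 hb
  have hfix : φ ((φ b - b)⁻¹ * u) = (φ b - b)⁻¹ * u := by
    rw [map_mul, map_inv₀, map_sub, hφ b, hu, ← neg_sub (φ b) b, inv_neg, neg_mul_neg]
  exact ⟨b * ((φ b - b)⁻¹ * u), by rw [map_mul, hfix, ← sub_mul, mul_inv_cancel_left₀ hd]⟩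

theorem map_add_sub_eq_iff {A G : Type*} [AddCommGroup A] [FunLike G A A]
    [AddMonoidHomClass G A A] (φ : G) (c s v : A) :
    φ (c + s) - (c + s) = φ v - v ↔ φ (c - (v - s)) = c - (v - s) := by
  rw [sub_eq_sub_iff_sub_eq_sub, ← map_sub, show c + s - v = c - (v - s) by abel]

end Involution

section FiniteField

variable {F : Type*} [Field F] [Fintype F] {q : ℕ}

theorem exists_ringHom_eq_pow {n : ℕ} (hq : IsPrimePow q) (hF : Fintype.card F = q ^ n) :
    ∃ φ : F →+* F, ∀ x, φ x = x ^ q := by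
  obtain ⟨p, k, hp, -, rfl⟩ := hq
  have : Fact p.Prime := ⟨hp.nat_prime⟩
  have : CharP F p := charP_of_card_eq_prime_pow (hF.trans (pow_mul p k n).symm)
  exact ⟨iterateFrobenius F p k, iterateFrobenius_def p k⟩

theorem exists_pow_ne_self (hq : 1 < q) (hF : q < Fintype.card F) : ∃ x : F, x ^ q ≠ x := by
  by_contra! h
  have hunits : ∀ u : Fˣ, u ^ (q - 1) = 1 := fun u => by
    rw [← mul_eq_right (b := u), pow_sub_one_mul (by lia)]
    exact Units.ext (by simpa only [Units.val_pow_eq_pow_val] using h u)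
  have := Nat.le_of_dvd (by lia) ((FiniteField.forall_pow_eq_one_iff F (q - 1)).1 hunits)
  lia

theorem existsUnique_Falpha_eq (hq : IsPrimePow q) (hF : Fintype.card F = q ^ 2) (a b : F)
    {C : Finset F} (hC : ∀ x : F, ∃! c : F, c ∈ C ∧ (c - x) ^ q = c - x) {m : ℕ}
    (α : Fin m → F) {γ : F} (hγ : γ + γ ^ q = 0) (y : Fin m → F) :
    ∃! c : F, c ∈ C ∧ Falpha q a b α (y, c) = γ := by
  obtain ⟨φ, hpow⟩ := exists_ringHom_eq_pow hq hF
  have hφ : Function.Involutive φ := fun x => by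
    rw [hpow, hpow, ← pow_mul, ← sq, ← hF, FiniteField.pow_card]
  obtain ⟨d, hd⟩ : ∃ d : F, d ^ q ≠ d :=
    exists_pow_ne_self hq.one_lt (hF ▸ lt_self_pow₀ hq.one_lt one_lt_two)
  obtain ⟨v, rfl⟩ : ∃ v, φ v - v = γ :=
    exists_map_sub_self_eq hφ (hpow d ▸ hd) (hpow γ ▸ eq_neg_of_add_eq_zero_right hγ)
  simp only [← hpow] at hC
  simpa only [Falpha_eq_map_sub_self hpow hφ, map_add_sub_eq_iff]
    using hC (v - hermShift φ a b α y)

end FiniteField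

theorem card_filter_prod_of_existsUnique {Y Z : Type*} [Fintype Y] [Fintype Z]
    {P : Y × Z → Prop} [DecidablePred P] (hP : ∀ y, ∃! z, P (y, z)) :
    (Finset.univ.filter P).card = Fintype.card Y := by
  refine Finset.card_bij (fun x _ => x.1) (fun _ _ => Finset.mem_univ _) ?_ ?_
  · rintro ⟨y, z⟩ h ⟨_, z'⟩ h' rfl
    exact Prod.ext rfl ((hP y).unique (Finset.mem_filter.1 h).2 (Finset.mem_filter.1 h').2)
  · intro y _
    obtain ⟨z, hz⟩ := (hP y).exists
    exact ⟨(y, z), Finset.mem_filter.2 ⟨Finset.mem_univ _, hz⟩, rfl⟩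

theorem column_balance_general (q : ℕ) (hq : IsPrimePow q)
    (F : Type*) [Field F] [Fintype F] [DecidableEq F] (hF : Fintype.card F = q ^ 2) (a b : F)
    (C : Finset F) (hC : ∀ x : F, ∃! c : F, c ∈ C ∧ (c - x) ^ q = c - x)
    (m : ℕ) (α : Fin m → F) (γ : F) (hγ : γ + γ ^ q = 0) :
    (Finset.univ.filter (fun x : (Fin m → F) × F =>
        x.2 ∈ C ∧ Falpha q a b α x = γ)).card = q ^ (2 * m) := by
  rw [card_filter_prod_of_existsUnique (existsUnique_Falpha_eq hq hF a b hC α hγ),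
    Fintype.card_fun, hF, Fintype.card_fin, ← pow_mul]

/-- Each symbol `γ ∈ T₀` occurs exactly `q^(2n-2)` times in each column of the
array `(F_α(x))_{x ∈ W, α ∈ F^{n-1}}`, where `W = F^{n-1} × C`. -/
theorem column_balance (q : ℕ) (hq : IsPrimePow q)
    (F : Type*) [Field F] [Fintype F] [DecidableEq F] (hF : Fintype.card F = q ^ 2)
    (a b : F) (ha : a ≠ 0) (hb : b ^ q ≠ b)
    (C : Finset F) (hC : ∀ x : F, ∃! c : F, c ∈ C ∧ (c - x) ^ q = c - x)
    (n : ℕ) (hn : 2 ≤ n) (α : Fin (n - 1) → F)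
    (γ : F) (hγ : γ + γ ^ q = 0) :
    (Finset.univ.filter (fun x : (Fin (n - 1) → F) × F =>
        x.2 ∈ C ∧ Falpha q a b α x = γ)).card = q ^ (2 * n - 2) :=
  Nat.mul_sub_one 2 n ▸ column_balance_general q hq F hF a b C hC (n - 1) α γ hγ
end

section
/- Let n = 3 and let (x₁,y₁,z₁), (x₂,y₂,z₂) ∈ W = F² × C. Then there exists z₃ ∈ C such that for every ω = (ω₁,ω₂) ∈ F² one has F_ω(x₁,y₁,z₁) + F_ω(x₂,y₂,z₂) = F_ω(x₁+x₂, y₁+y₂, z₃). In particular the code {(F_ω(P))_{ω} : P ∈ W} is closed under coordinatewise addition. -/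
/-!
Write `σ x = x ^ q`, an involution of `F`, and put `L t = σ t - t` and `Q x = a x² - b x σ(x)`.
Since `x σ(x)` and `ω σ(x) + σ(ω) x` are fixed by `σ`, every term of `F_ω` is a value of `L`, and
`F_ω(x, y, z) = L (z + Q(x + ω₁) - Q(ω₁) + Q(y + ω₂) - Q(ω₂))`.
As `Q` is quadratic, `u ↦ Q(u + ω) - Q(ω)` is additive up to the polar form of `Q` at the two
arguments, which does not depend on `ω` and can therefore be absorbed into `z₃`. The kernel of `L`
is `K`, so moving `z₃` into the transversal does not change the value.
-/

/-- The affine form `F_ω` (case `n = 3`) associated to `ω = (ω₁, ω₂) ∈ F²`. -/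
def Fw {F : Type*} [Field F] (q : ℕ) (a b ω₁ ω₂ x y z : F) : F :=
  z ^ q - z + a ^ q * (x ^ (2 * q) + y ^ (2 * q)) - a * (x ^ 2 + y ^ 2)
    - (b ^ q - b) * (x ^ (q + 1) + y ^ (q + 1))
    + (2 * a ^ q * ω₁ ^ q - (b ^ q - b) * ω₁) * x ^ q
    + (2 * a ^ q * ω₂ ^ q - (b ^ q - b) * ω₂) * y ^ q
    - (2 * a * ω₁ + (b ^ q - b) * ω₁ ^ q) * x
    - (2 * a * ω₂ + (b ^ q - b) * ω₂ ^ q) * y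

section DifferencesOfQuadraticMaps

variable {R M N A : Type*} [CommRing R] [AddCommGroup M] [AddCommGroup N] [AddCommGroup A]
  [Module R M] [Module R N]

theorem quadraticMap_sub_add_sub (Q : QuadraticMap R M N) (u v ω : M) :
    (Q (u + ω) - Q ω) + (Q (v + ω) - Q ω)
      = (Q (u + v + ω) - Q ω) - QuadraticMap.polar Q u v := by
  have h := Q.map_add_add_add_map u v ω
  rw [add_comm ω u] at h
  unfold QuadraticMap.polar
  linear_combination (norm := abel) -h

theorem exists_mem_forall_map_quadraticMap_sub_add (Q : QuadraticMap R M N) (L : N →+ A)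
    {C : Set N} (hC : ∀ z, ∃ c ∈ C, L c = L z) (u v : M) (z w : N) :
    ∃ c ∈ C, ∀ ω, L (z + (Q (u + ω) - Q ω)) + L (w + (Q (v + ω) - Q ω))
      = L (c + (Q (u + v + ω) - Q ω)) := by
  obtain ⟨c, hcC, hc⟩ := hC (z + w - QuadraticMap.polar Q u v)
  refine ⟨c, hcC, fun ω => ?_⟩
  calc L (z + (Q (u + ω) - Q ω)) + L (w + (Q (v + ω) - Q ω))
      = L (z + w + ((Q (u + ω) - Q ω) + (Q (v + ω) - Q ω))) := by
        rw [← map_add, add_add_add_comm]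
    _ = L (z + w - QuadraticMap.polar Q u v + (Q (u + v + ω) - Q ω)) := by
        rw [quadraticMap_sub_add_sub]
        congr 1
        abel
    _ = L (c + (Q (u + v + ω) - Q ω)) := by rw [map_add, ← hc, ← map_add]

end DifferencesOfQuadraticMaps

section TwistedSquares

variable {R : Type*} [CommRing R]

/-- The additive Artin–Schreier map `t ↦ σ t - t` of a ring endomorphism `σ`; its kernel is the
fixed ring of `σ`. -/
def artinSchreier (σ : R →+* R) : R →+ R :=
  σ.toAddMonoidHom - AddMonoidHom.id R

theorem artinSchreier_apply (σ : R →+* R) (t : R) : artinSchreier σ t = σ t - t := rfl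

theorem artinSchreier_eq_iff (σ : R →+* R) {s t : R} :
    artinSchreier σ s = artinSchreier σ t ↔ σ (s - t) = s - t := by
  rw [← sub_eq_zero, ← map_sub, artinSchreier_apply, sub_eq_zero]

/-- The quadratic map `x ↦ a x² - b x σ(x)` behind the forms `F_ω`. It is quadratic over the
subring fixed by `σ`; integer scalars are enough to use its polar form. -/
def twistedSquare (σ : R →+* R) (a b : R) : QuadraticMap ℤ R R :=
  LinearMap.BilinMap.toQuadraticMap <|
    a • LinearMap.mul ℤ R - b • (LinearMap.mul ℤ R).compl₂ σ.toAddMonoidHom.toIntLinearMap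

theorem twistedSquare_apply (σ : R →+* R) (a b x : R) :
    twistedSquare σ a b x = a * x ^ 2 - b * (x * σ x) := by
  simp [twistedSquare, sq]

end TwistedSquares

section FiniteField

variable {F : Type*} [Field F]

theorem exists_ringHom_eq_pow_of_card_eq_pow [Fintype F] {q n : ℕ} (hq : IsPrimePow q)
    (hF : Fintype.card F = q ^ n) : ∃ σ : F →+* F, ∀ x, σ x = x ^ q := by
  obtain ⟨p, k, hp, -, rfl⟩ := hq
  have : Fact p.Prime := ⟨hp.nat_prime⟩
  have : CharP F p := charP_of_card_eq_prime_pow (hF.trans (pow_mul p k n).symm)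
  exact ⟨iterateFrobenius F p k, iterateFrobenius_def p k⟩

theorem involutive_pow_of_card_eq_sq [Fintype F] {q : ℕ} (hF : Fintype.card F = q ^ 2) :
    Function.Involutive fun x : F => x ^ q := fun x => by
  simp only [← pow_mul, ← sq, ← hF, FiniteField.pow_card]

theorem Fw_eq_artinSchreier {q : ℕ} {σ : F →+* F} (hσ : ∀ x, σ x = x ^ q)
    (hinv : Function.Involutive σ) (a b ω₁ ω₂ x y z : F) :
    Fw q a b ω₁ ω₂ x y z = artinSchreier σ (z
      + ((twistedSquare σ a b).prod (twistedSquare σ a b) ((x, y) + (ω₁, ω₂))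
        - (twistedSquare σ a b).prod (twistedSquare σ a b) (ω₁, ω₂))) := by
  simp only [Fw, mul_comm 2 q, pow_mul, pow_succ _ q, ← hσ, artinSchreier_apply,
    QuadraticMap.prod_apply, twistedSquare_apply, Prod.mk_add_mk, map_add, map_sub,
    map_mul, map_pow, hinv _]
  ring

end FiniteField

/-- Additivity of the evaluation code: for points of `W = F² × C` the sum of the
values of `F_ω` at two points is the value of `F_ω` at a third point of `W`,
simultaneously for all `ω`. -/
theorem code_closed_under_addition (q : ℕ) (hq : IsPrimePow q)
    (F : Type*) [Field F] [Fintype F] (hF : Fintype.card F = q ^ 2)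
    (a b : F) (ha : a ≠ 0) (hb : b ^ q ≠ b)
    (C : Finset F) (hC : ∀ x : F, ∃! c : F, c ∈ C ∧ (c - x) ^ q = c - x)
    (x₁ y₁ z₁ x₂ y₂ z₂ : F) (h₁ : z₁ ∈ C) (h₂ : z₂ ∈ C) :
    ∃ z₃ ∈ C, ∀ ω₁ ω₂ : F,
      Fw q a b ω₁ ω₂ x₁ y₁ z₁ + Fw q a b ω₁ ω₂ x₂ y₂ z₂
        = Fw q a b ω₁ ω₂ (x₁ + x₂) (y₁ + y₂) z₃ := by
  obtain ⟨σ, hσ⟩ := exists_ringHom_eq_pow_of_card_eq_pow hq hF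
  have hinv : Function.Involutive σ := by
    simpa only [← hσ] using involutive_pow_of_card_eq_sq hF
  have hrep : ∀ z, ∃ c ∈ (C : Set F), artinSchreier σ c = artinSchreier σ z := fun z => by
    obtain ⟨c, ⟨hcC, hc⟩, -⟩ := hC z
    exact ⟨c, hcC, (artinSchreier_eq_iff σ).2 ((hσ _).trans hc)⟩
  obtain ⟨z₃, hz₃, hadd⟩ := exists_mem_forall_map_quadraticMap_sub_add
    ((twistedSquare σ a b).prod (twistedSquare σ a b)) (artinSchreier σ) hrep
    (x₁, y₁) (x₂, y₂) z₁ z₂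
  refine ⟨z₃, hz₃, fun ω₁ ω₂ => ?_⟩
  simp only [Fw_eq_artinSchreier hσ hinv]
  exact hadd (ω₁, ω₂)
end
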